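/- Variation along characteristic lines (Proposition 5.3): Assume 3 ≤ d ≤ 6, 1 + 4/(d−1) ≤ p < 1 + 4/(d−2), and a > −(d−2)²/4 + ((d−2)p − d)²/(4p²). Let u be a finite-energy radial classical solution of (NLW_a) with energy E, and define w(r,t) = r^{(d−1)/2} u(r,t) for r > 0. Set β = ((d−1)(p−1)−2)/(2(p+1)), which lies in (0, 1/2). Then there exists a constant C, depending only on d, p, a, E, such that for all real numbers τ, t₁, t₂, s with τ + 1 < t₁ < t₂ < s − 1: |(∂ₜw + ∂ᵣw)(s−t₂, t₂) − (∂ₜw + ∂ᵣw)(s−t₁, t₁)| ≤ C (s−t₂)^{−β} and |(∂ₜw − ∂ᵣw)(t₂−τ, t₂) − (∂ₜw − ∂ᵣw)(t₁−τ, t₁)| ≤ C (t₁−τ)^{−β}. -/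

import Mathlib

/-!
Write `v` for the radial profile, `n = d − 1` and `c = (n − 1)/2 = (d − 2)/2`. The hypothesis on `a`
gives `κ = a + c² > 0`, so the Hardy-completed density
`e = rⁿ(½vₜ² + ½(vᵣ + c v/r)² + ½κ v²/r² + |v|^{p+1}/(p+1))` is nonnegative. With the flux
`J = rⁿ vₜ(vᵣ + c v/r)` it satisfies `∂ₜe = ∂ᵣJ` (`RadialWave.conservation`), and
`e ± J ≥ rⁿ(½κ v²/r² + |v|^{p+1}/(p+1))`. It differs from the radial energy density by
`(c/2)∂ᵣ(r^{n−1}v²)`, whose integral over `(0,∞)` is zero because both `r^{n−2}v²` and the derivative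
are integrable; hence the energy of the solution is the area of the unit sphere times
`∫₀^∞ e dr` (`energy_eq`).

The divergence theorem on the triangle with apex `(s − t₁, t₁)`, characteristic sides and top side at
time `t₂` (`RadialWave.triangle`) bounds the integral of `e − J` along `r = s − t` by a multiple of
the energy. On the other hand, along this characteristic
`d/dt (wₜ + wᵣ) = −r^{n/2}(|v|^{p−1}v + (a + n(n−2)/4)v/r²)`. With `ρ = s − t₂`, the smallest radius
on the segment, Young's inequality gives
`r^{n/2}|v|^p ≲ ρ^{−β} rⁿ|v|^{p+1} + ρ^{βp} r^{−n(p−1)/2}` and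
`r^{n/2}|v|/r² ≲ ρ^{−β} rⁿv²/r² + ρ^β r^{−2}`. The first terms are controlled by `ρ^{−β}(e − J)`. The
remaining powers of `r` are integrated over `r ≥ ρ`: the first yields a multiple of `ρ^{−β}` by the
choice of `β`, the second `ρ^{β−1} ≤ ρ^{−β}`, since `β < 1/2` and `ρ > 1`. This proves the first
inequality (`RadialWave.variation`); the second is the first one for the time-reversed solution.
-/

noncomputable section

open MeasureTheory Metric Filter Real Set

/-- The Laplacian of `f : ℝ^d → ℝ`, written as the sum of second partial derivatives
in the coordinate directions. -/
def lap {d : ℕ} (f : EuclideanSpace ℝ (Fin d) → ℝ) (x : EuclideanSpace ℝ (Fin d)) : ℝ :=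
  ∑ i : Fin d, fderiv ℝ (fun y => fderiv ℝ f y (EuclideanSpace.single i 1)) x
    (EuclideanSpace.single i 1)

/-- A finite-energy radial classical solution of the defocusing nonlinear wave equation
with inverse-square potential `∂ₜ²u − Δu + a|x|⁻²u = −|u|^{p−1}u` on `ℝ^d`. -/
structure Sol (d : ℕ) (a p : ℝ) where
  /-- the solution, as a function of `(x, t)` -/
  u : EuclideanSpace ℝ (Fin d) → ℝ → ℝ
  /-- the radial profile: `u(x,t)` depends on `x` only through `r = |x|` -/
  rad : ℝ → ℝ → ℝ
  u_eq_rad : ∀ (x : EuclideanSpace ℝ (Fin d)) (t : ℝ), u x t = rad ‖x‖ t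
  smooth : ContDiffOn ℝ 2 (fun q : EuclideanSpace ℝ (Fin d) × ℝ => u q.1 q.2)
    {q : EuclideanSpace ℝ (Fin d) × ℝ | q.1 ≠ 0}
  pde : ∀ (x : EuclideanSpace ℝ (Fin d)) (t : ℝ), x ≠ 0 →
    deriv (deriv (u x)) t - lap (fun y => u y t) x + a * u x t / ‖x‖ ^ 2
      = -(|u x t| ^ (p - 1) * u x t)
  finite : ∀ t : ℝ, Integrable (fun x : EuclideanSpace ℝ (Fin d) =>
    ‖gradient (fun y => u y t) x‖ ^ 2 + (u x t) ^ 2 / ‖x‖ ^ 2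
      + (deriv (u x) t) ^ 2 + |u x t| ^ (p + 1))
  /-- the (conserved) energy -/
  energy : ℝ
  energy_def : ∀ t : ℝ, energy = ∫ x : EuclideanSpace ℝ (Fin d),
    ((1:ℝ)/2 * ‖gradient (fun y => u y t) x‖ ^ 2 + a / 2 * (u x t) ^ 2 / ‖x‖ ^ 2
      + 1/2 * (deriv (u x) t) ^ 2 + 1/(p+1) * |u x t| ^ (p + 1))

/-- The surface integral `∫_{|x|=R} g dS` over the sphere of radius `R` in `ℝ^d`,
expressed via the surface measure `volume.toSphere` on the unit sphere. -/
def sphereIntegral (d : ℕ) (R : ℝ) (g : EuclideanSpace ℝ (Fin d) → ℝ) : ℝ :=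
  R ^ (d - 1) * ∫ ω : Metric.sphere (0 : EuclideanSpace ℝ (Fin d)) 1,
    g (R • (ω : EuclideanSpace ℝ (Fin d)))
      ∂((volume : Measure (EuclideanSpace ℝ (Fin d))).toSphere)

/-- The auxiliary function `w(r,t) = r^{(d−1)/2} u(r,t)` built from the radial profile. -/
def wfun (d : ℕ) (rad : ℝ → ℝ → ℝ) (r t : ℝ) : ℝ :=
  r ^ (((d : ℝ) - 1) / 2) * rad r t

/-! ### The radial equation and its energy law -/

/-- A classical solution, on the half plane `r > 0`, of the radial equation
`∂ₜ²v − ∂ᵣ²v − (n/r)∂ᵣv + a v/r² = −|v|^{p−1}v`, where `n = d − 1`. The first and second partial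
derivatives are part of the data and are tied to `v` by Fréchet differentiability at each point
with `r > 0`; using the same `vrt` for `∂ₜvr` and `∂ᵣvt` encodes the symmetry of the second
derivative. -/
structure RadialWave (n : ℕ) (a p : ℝ) where
  v : ℝ → ℝ → ℝ
  vr : ℝ → ℝ → ℝ
  vt : ℝ → ℝ → ℝ
  vrr : ℝ → ℝ → ℝ
  vrt : ℝ → ℝ → ℝ
  vtt : ℝ → ℝ → ℝ
  hv : ∀ r t : ℝ, 0 < r → HasFDerivAt (fun q : ℝ × ℝ => v q.1 q.2)
    (vr r t • ContinuousLinearMap.fst ℝ ℝ ℝ + vt r t • ContinuousLinearMap.snd ℝ ℝ ℝ) (r, t)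
  hvr : ∀ r t : ℝ, 0 < r → HasFDerivAt (fun q : ℝ × ℝ => vr q.1 q.2)
    (vrr r t • ContinuousLinearMap.fst ℝ ℝ ℝ + vrt r t • ContinuousLinearMap.snd ℝ ℝ ℝ) (r, t)
  hvt : ∀ r t : ℝ, 0 < r → HasFDerivAt (fun q : ℝ × ℝ => vt q.1 q.2)
    (vrt r t • ContinuousLinearMap.fst ℝ ℝ ℝ + vtt r t • ContinuousLinearMap.snd ℝ ℝ ℝ) (r, t)
  eqn : ∀ r t : ℝ, 0 < r → vtt r t - vrr r t - n / r * vr r t + a * v r t / r ^ 2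
    = -(|v r t| ^ (p - 1) * v r t)

namespace RadialWave

variable {n : ℕ} {a p : ℝ} (V : RadialWave n a p)

/-- The Hardy-completed radial energy density
`rⁿ(½vₜ² + ½(vᵣ + c v/r)² + ½(a + c²)v²/r² + |v|^{p+1}/(p+1))` with `c = (n−1)/2 = (d−2)/2`. It
differs from the energy density by an exact `r`-derivative, and it is nonnegative as soon as
`a > −c²`, even where `a < 0`. -/
def dens (r t : ℝ) : ℝ :=
  r ^ n * (V.vt r t ^ 2 / 2 + (V.vr r t + (n - 1) / 2 * V.v r t / r) ^ 2 / 2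
    + (a + ((n - 1) / 2) ^ 2) / 2 * V.v r t ^ 2 / r ^ 2 + |V.v r t| ^ (p + 1) / (p + 1))

/-- The energy flux `rⁿ vₜ(vᵣ + c v/r)` belonging to `dens`: `∂ₜ dens = ∂ᵣ flux`. -/
def flux (r t : ℝ) : ℝ :=
  r ^ n * (V.vt r t * (V.vr r t + (n - 1) / 2 * V.v r t / r))

/-- The time-reversed solution `(r, t) ↦ v(r, −t)`. -/
def rev : RadialWave n a p where
  v r t := V.v r (-t)
  vr r t := V.vr r (-t)
  vt r t := -V.vt r (-t)
  vrr r t := V.vrr r (-t)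
  vrt r t := -V.vrt r (-t)
  vtt r t := V.vtt r (-t)
  hv r t hr := by
    have h := (V.hv r (-t) hr).comp (r, t) (f := fun q : ℝ × ℝ => (q.1, -q.2))
      (hasFDerivAt_fst.prodMk hasFDerivAt_snd.neg)
    refine h.congr_fderiv ?_
    ext <;> simp
  hvr r t hr := by
    have h := (V.hvr r (-t) hr).comp (r, t) (f := fun q : ℝ × ℝ => (q.1, -q.2))
      (hasFDerivAt_fst.prodMk hasFDerivAt_snd.neg)
    refine h.congr_fderiv ?_
    ext <;> simp
  hvt r t hr := by
    have h := ((V.hvt r (-t) hr).comp (r, t) (f := fun q : ℝ × ℝ => (q.1, -q.2))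
      (hasFDerivAt_fst.prodMk hasFDerivAt_snd.neg)).neg
    refine h.congr_fderiv ?_
    ext <;> simp
  eqn r t hr := V.eqn r (-t) hr

theorem rev_dens (r t : ℝ) : V.rev.dens r t = V.dens r (-t) := by
  simp [dens, rev]

theorem hasDerivAt_pow_div {r : ℝ} (n : ℕ) (hr : 0 < r) :
    HasDerivAt (fun x : ℝ => x ^ n) (n * r ^ n / r) r := by
  refine (hasDerivAt_pow n r).congr_deriv ?_
  rcases n with _ | k
  · simp
  · simp only [Nat.add_sub_cancel]
    field_simp
    rw [pow_succ]

/-- The local conservation law `∂ₜ dens = ∂ᵣ flux`, together with differentiability of both. -/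
theorem conservation (hp : 1 < p) {r t : ℝ} (hr : 0 < r) : ∃ er e jr : ℝ, ∃ jt : ℝ,
    HasFDerivAt (fun q : ℝ × ℝ => V.dens q.1 q.2)
      (er • ContinuousLinearMap.fst ℝ ℝ ℝ + e • ContinuousLinearMap.snd ℝ ℝ ℝ) (r, t) ∧
    HasFDerivAt (fun q : ℝ × ℝ => V.flux q.1 q.2)
      (jr • ContinuousLinearMap.fst ℝ ℝ ℝ + jt • ContinuousLinearMap.snd ℝ ℝ ℝ) (r, t) ∧
    e = jr := by
  have hr0 : r ≠ 0 := hr.ne'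
  have h1 := V.hv r t hr
  have h2 := V.hvr r t hr
  have h3 := V.hvt r t hr
  have hx : HasFDerivAt (fun q : ℝ × ℝ => q.1) (ContinuousLinearMap.fst ℝ ℝ ℝ) (r, t) :=
    hasFDerivAt_fst
  have hi : HasFDerivAt (fun q : ℝ × ℝ => q.1⁻¹)
      ((-(r ^ 2)⁻¹) • ContinuousLinearMap.fst ℝ ℝ ℝ) (r, t) :=
    (hasDerivAt_inv hr0).comp_hasFDerivAt (r, t) hx
  have hn : HasFDerivAt (fun q : ℝ × ℝ => q.1 ^ n)
      ((n * r ^ n / r) • ContinuousLinearMap.fst ℝ ℝ ℝ) (r, t) :=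
    (hasDerivAt_pow_div n hr).comp_hasFDerivAt (r, t) hx
  have hN : HasFDerivAt (fun q : ℝ × ℝ => |V.v q.1 q.2| ^ (p + 1))
      (((p + 1) * (|V.v r t| ^ (p - 1)) * V.v r t) •
        (V.vr r t • ContinuousLinearMap.fst ℝ ℝ ℝ + V.vt r t • ContinuousLinearMap.snd ℝ ℝ ℝ))
      (r, t) := by
    have := (hasDerivAt_abs_rpow (V.v r t) (p := p + 1) (by linarith))
    rw [show p + 1 - 2 = p - 1 by ring] at this
    exact this.comp_hasFDerivAt (r, t) h1
  have hw := h2.add ((h1.mul hi).const_mul (((n : ℝ) - 1) / 2))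
  have hJ := hn.mul (h3.mul hw)
  have hE := hn.mul (((((h3.mul h3).const_mul (1 / 2)).add ((hw.mul hw).const_mul (1 / 2))).add
    ((((h1.mul hi).mul (h1.mul hi))).const_mul ((a + (((n : ℝ) - 1) / 2) ^ 2) / 2))).add
      (hN.const_mul (1 / (p + 1))))
  have hp0 : p + 1 ≠ 0 := by linarith
  have heq : V.vtt r t = V.vrr r t + n / r * V.vr r t - a * V.v r t / r ^ 2
    -(|V.v r t| ^ (p - 1) * V.v r t) := by linarith [V.eqn r t hr]
  -- `hE` and `hJ` give the derivatives as unsimplified linear maps; their coefficients are read off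
  -- by evaluation at the coordinate vectors.
  have key : ∀ L : ℝ × ℝ →L[ℝ] ℝ, L = L (1, 0) • ContinuousLinearMap.fst ℝ ℝ ℝ
      + L (0, 1) • ContinuousLinearMap.snd ℝ ℝ ℝ := by
    intro L; ext <;> simp
  refine ⟨_, _, _, _, (hE.congr_of_eventuallyEq ?_).congr_fderiv (key _),
    (hJ.congr_of_eventuallyEq ?_).congr_fderiv (key _), ?_⟩
  · refine Eventually.of_forall fun q => ?_
    simp only [dens, Pi.mul_apply, Pi.add_apply, div_eq_mul_inv]
    ring
  · refine Eventually.of_forall fun q => ?_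
    simp only [flux, Pi.mul_apply, Pi.add_apply, div_eq_mul_inv]
    ring
  · simp [heq]
    field_simp
    ring

/-- The energy identity on the triangle with apex `(s − t₁, t₁)` bounded by the incoming
characteristic `r = s − t`, the outgoing characteristic `r = s − 2t₁ + t` and the line `t = t₂`:
the fluxes through the two characteristic sides add up to the energy on the top side. The triangle
is parametrised over the box `[0,1] × [t₁,t₂]` by `(θ, t) ↦ (s − t + 2θ(t − t₁), t)`, which maps
the bottom side to the apex, and the divergence theorem is applied on the box. -/
theorem triangle (hp : 1 < p) {s t₁ t₂ : ℝ} (h12 : t₁ < t₂) (h2 : t₂ < s) :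
    ∫ t in t₁..t₂, (V.dens (s - t) t - V.flux (s - t) t)
        + (V.dens (s - t + 2 * (t - t₁)) t + V.flux (s - t + 2 * (t - t₁)) t)
      = ∫ r in (s - t₂)..(s - t₂ + 2 * (t₂ - t₁)), V.dens r t₂ := by
  classical
  have H : ∀ q : ℝ × ℝ, ∃ er e jr jt : ℝ, 0 < q.1 →
    (HasFDerivAt (fun q : ℝ × ℝ => V.dens q.1 q.2)
      (er • ContinuousLinearMap.fst ℝ ℝ ℝ + e • ContinuousLinearMap.snd ℝ ℝ ℝ) q ∧
    HasFDerivAt (fun q : ℝ × ℝ => V.flux q.1 q.2)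
      (jr • ContinuousLinearMap.fst ℝ ℝ ℝ + jt • ContinuousLinearMap.snd ℝ ℝ ℝ) q ∧
    e = jr) := by
    intro q
    by_cases hq : 0 < q.1
    · obtain ⟨er, e, jr, jt, h⟩ := V.conservation hp (t := q.2) hq
      exact ⟨er, e, jr, jt, fun _ => h⟩
    · exact ⟨0, 0, 0, 0, fun h => absurd h hq⟩
  choose er e jr jt H using H
  let ρ : ℝ × ℝ → ℝ := fun z => s - z.2 + z.1 * (2 * (z.2 - t₁))
  have hρpos : ∀ z ∈ (uIcc (0:ℝ) 1 ×ˢ uIcc t₁ t₂), 0 < ρ z := by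
    rintro ⟨θ, t⟩ ⟨hθ, ht⟩
    rw [uIcc_of_le zero_le_one] at hθ
    rw [uIcc_of_le h12.le] at ht
    have : 0 ≤ θ * (2 * (t - t₁)) := mul_nonneg hθ.1 (by linarith [ht.1])
    have := ht.2
    simp only [ρ] at *
    linarith
  let dρ : ℝ × ℝ → (ℝ × ℝ →L[ℝ] ℝ) := fun z => (2 * (z.2 - t₁)) • ContinuousLinearMap.fst ℝ ℝ ℝ
    + (2 * z.1 - 1) • ContinuousLinearMap.snd ℝ ℝ ℝ
  have hρ : ∀ z, HasFDerivAt (fun z => (ρ z, z.2)) ((dρ z).prod (ContinuousLinearMap.snd ℝ ℝ ℝ)) z := by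
    intro z
    refine HasFDerivAt.prodMk ?_ hasFDerivAt_snd
    have h := ((hasFDerivAt_const s z).sub (hasFDerivAt_snd (𝕜 := ℝ) (p := z))).add
      ((hasFDerivAt_fst (𝕜 := ℝ) (p := z)).mul
      (((hasFDerivAt_snd (𝕜 := ℝ) (p := z)).sub_const t₁).const_mul 2))
    refine h.congr_fderiv ?_
    ext
    · simp [dρ]
    · simp [dρ]
      ring
  -- The field `(P, Q)` is the pullback of `(−flux, dens)` (Piola transform), so it is again
  -- divergence free.
  let P : ℝ × ℝ → ℝ := fun z => -(V.flux (ρ z) z.2 + (2 * z.1 - 1) * V.dens (ρ z) z.2)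
  let Q : ℝ × ℝ → ℝ := fun z => V.dens (ρ z) z.2 * (2 * (z.2 - t₁))
  have hD : ∀ z ∈ (uIcc (0:ℝ) 1 ×ˢ uIcc t₁ t₂), ∃ A B : ℝ × ℝ →L[ℝ] ℝ, HasFDerivAt P A z ∧
      HasFDerivAt Q B z ∧ A (1, 0) + B (0, 1) = 0 := by
    intro z hz
    obtain ⟨h1, h2, h3⟩ := H (ρ z, z.2) (hρpos z hz)
    have k1 := h1.comp z (hρ z)
    have k2 := h2.comp z (hρ z)
    have kP := (k2.add ((((hasFDerivAt_fst (𝕜 := ℝ) (p := z)).const_mul 2).sub_const 1).mul k1)).neg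
    have kQ := k1.mul (((hasFDerivAt_snd (𝕜 := ℝ) (p := z)).sub_const t₁).const_mul 2)
    refine ⟨_, _, kP, kQ, ?_⟩
    simp [dρ, h3]
    ring
  have hD' : ∀ z, ∃ A B : ℝ × ℝ →L[ℝ] ℝ, z ∈ (uIcc (0:ℝ) 1 ×ˢ uIcc t₁ t₂) → HasFDerivAt P A z ∧
      HasFDerivAt Q B z ∧ A (1, 0) + B (0, 1) = 0 := by
    intro z
    by_cases hz : z ∈ (uIcc (0:ℝ) 1 ×ˢ uIcc t₁ t₂)
    · obtain ⟨A, B, h⟩ := hD z hz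
      exact ⟨A, B, fun _ => h⟩
    · exact ⟨0, 0, fun h => absurd h hz⟩
  choose A B hAB using hD'
  have hsub : ∀ z ∈ Ioo (min (0:ℝ) 1) (max 0 1) ×ˢ Ioo (min t₁ t₂) (max t₁ t₂),
      z ∈ (uIcc (0:ℝ) 1 ×ˢ uIcc t₁ t₂) := fun z hz =>
    ⟨Ioo_subset_Icc_self hz.1, Ioo_subset_Icc_self hz.2⟩
  have hPc : ContinuousOn P (uIcc (0:ℝ) 1 ×ˢ uIcc t₁ t₂) :=
    fun z hz => (hAB z hz).1.continuousAt.continuousWithinAt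
  have hQc : ContinuousOn Q (uIcc (0:ℝ) 1 ×ˢ uIcc t₁ t₂) :=
    fun z hz => (hAB z hz).2.1.continuousAt.continuousWithinAt
  have hdiv := integral2_divergence_prod_of_hasFDerivAt P Q A B 0 t₁ 1 t₂ hPc hQc
    (fun z hz => (hAB z (hsub z hz)).1) (fun z hz => (hAB z (hsub z hz)).2.1)
    ((integrableOn_congr_fun (g := fun _ => (0:ℝ)) (fun z hz => (hAB z hz).2.2)
      (measurableSet_uIcc.prod measurableSet_uIcc)).2 integrableOn_zero)
  have hzero : (∫ x in (0:ℝ)..1, ∫ y in t₁..t₂, A (x, y) (1, 0) + B (x, y) (0, 1)) = 0 := by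
    rw [intervalIntegral.integral_congr (g := fun _ => (0:ℝ))]
    · simp
    · intro x hx
      dsimp only
      rw [intervalIntegral.integral_congr (g := fun _ => (0:ℝ))]
      · simp
      · intro y hy
        exact (hAB (x, y) ⟨hx, hy⟩).2.2
  -- The bottom side of the box is collapsed to the apex and carries no flux.
  have hQ1 : ∫ x in (0:ℝ)..1, Q (x, t₁) = 0 := by simp [Q]
  have hQ2 : ∫ x in (0:ℝ)..1, Q (x, t₂)
      = ∫ r in (s - t₂)..(s - t₂ + 2 * (t₂ - t₁)), V.dens r t₂ := by
    have := intervalIntegral.mul_integral_comp_mul_add (a := (0:ℝ)) (b := 1)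
      (f := fun r => V.dens r t₂) (c := 2 * (t₂ - t₁)) (d := s - t₂)
    simp only [mul_zero, zero_add, mul_one] at this
    rw [add_comm (s - t₂), ← this, ← intervalIntegral.integral_const_mul]
    refine intervalIntegral.integral_congr fun x _ => ?_
    simp only [Q, ρ]
    rw [show s - t₂ + x * (2 * (t₂ - t₁)) = 2 * (t₂ - t₁) * x + (s - t₂) by ring]
    ring
  have hc : ∀ x ∈ uIcc (0:ℝ) 1, IntervalIntegrable (fun y => P (x, y)) volume t₁ t₂ := by
    intro x hx
    exact (hPc.comp (by fun_prop : ContinuousOn (fun y : ℝ => (x, y)) (uIcc t₁ t₂))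
      (fun y hy => ⟨hx, hy⟩)).intervalIntegrable
  rw [hzero, hQ1, hQ2] at hdiv
  have hs := intervalIntegral.integral_sub (hc 0 left_mem_uIcc) (hc 1 right_mem_uIcc)
  have : ∫ t in t₁..t₂, (V.dens (s - t) t - V.flux (s - t) t)
        + (V.dens (s - t + 2 * (t - t₁)) t + V.flux (s - t + 2 * (t - t₁)) t)
      = ∫ t in t₁..t₂, P (0, t) - P (1, t) := by
    refine intervalIntegral.integral_congr fun t _ => ?_
    simp only [P, ρ, zero_mul, one_mul, add_zero]
    ring
  rw [this, hs]
  linarith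

/-! ### Variation along an incoming characteristic -/

/-- `r^{n/2}(vₜ + vᵣ + (n/2)v/r)`, which is `∂ₜw + ∂ᵣw` for `w = r^{n/2}v`. -/
def W (r t : ℝ) : ℝ := r ^ ((n : ℝ) / 2) * (V.vt r t + V.vr r t + n / 2 * V.v r t / r)

/-- Along `r = s − t` the derivative of `∂ₜw + ∂ᵣw` is `(∂ₜ² − ∂ᵣ²)w`, which contains no derivatives
of `v`. -/
theorem hasDerivAt_W {s t : ℝ} (h : t < s) :
    HasDerivAt (fun t => V.W (s - t) t)
      (-((s - t) ^ ((n : ℝ) / 2) * (|V.v (s - t) t| ^ (p - 1) * V.v (s - t) t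
        + (a + n * (n - 2) / 4) * V.v (s - t) t / (s - t) ^ 2))) t := by
  have hr : 0 < s - t := sub_pos.2 h
  have hr0 := hr.ne'
  have hid : HasDerivAt (fun t => s - t) (-1) t := by
    simpa using (hasDerivAt_id t).const_sub s
  have hcurve : HasDerivAt (fun t => (s - t, t)) ((-1 : ℝ), (1 : ℝ)) t :=
    hid.prodMk (hasDerivAt_id t)
  have h1 := (V.hv (s - t) t hr).comp_hasDerivAt (f := fun t => (s - t, t)) t hcurve
  have h2 := (V.hvr (s - t) t hr).comp_hasDerivAt (f := fun t => (s - t, t)) t hcurve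
  have h3 := (V.hvt (s - t) t hr).comp_hasDerivAt (f := fun t => (s - t, t)) t hcurve
  have hpow := hid.rpow_const (p := (n : ℝ) / 2) (Or.inl hr0)
  have hW := hpow.mul ((h3.add h2).add (((h1.const_mul ((n : ℝ) / 2))).div hid hr0))
  refine hW.congr_deriv ?_
  have heq : V.vtt (s - t) t = V.vrr (s - t) t + n / (s - t) * V.vr (s - t) t
    - a * V.v (s - t) t / (s - t) ^ 2
    -(|V.v (s - t) t| ^ (p - 1) * V.v (s - t) t) := by linarith [V.eqn (s - t) t hr]
  simp [heq, Real.rpow_sub_one hr0]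
  field_simp
  ring

/-- Coercivity of the energy flux through incoming characteristics. -/
theorem dens_sub_flux (r t : ℝ) (hr : 0 < r) :
    r ^ n * ((a + (((n : ℝ) - 1) / 2) ^ 2) / 2 * V.v r t ^ 2 / r ^ 2
      + |V.v r t| ^ (p + 1) / (p + 1)) ≤ V.dens r t - V.flux r t := by
  unfold dens flux
  rw [← mul_sub]
  refine mul_le_mul_of_nonneg_left ?_ (by positivity)
  nlinarith [sq_nonneg (V.vt r t - (V.vr r t + (n - 1) / 2 * V.v r t / r))]

/-- Coercivity of the energy flux through outgoing characteristics. -/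
theorem dens_add_flux (r t : ℝ) (hr : 0 < r) :
    r ^ n * ((a + (((n : ℝ) - 1) / 2) ^ 2) / 2 * V.v r t ^ 2 / r ^ 2
      + |V.v r t| ^ (p + 1) / (p + 1)) ≤ V.dens r t + V.flux r t := by
  unfold dens flux
  rw [← mul_add]
  refine mul_le_mul_of_nonneg_left ?_ (by positivity)
  nlinarith [sq_nonneg (V.vt r t + (V.vr r t + (n - 1) / 2 * V.v r t / r))]

theorem dens_nonneg (hp : 1 < p) (ha : 0 < a + (((n : ℝ) - 1) / 2) ^ 2) (r t : ℝ) (hr : 0 < r) :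
    0 ≤ V.dens r t := by
  unfold dens; positivity

theorem continuousAt_dens_flux (hp : 1 < p) {r t : ℝ} (hr : 0 < r) :
    ContinuousAt (fun q : ℝ × ℝ => V.dens q.1 q.2) (r, t) ∧
    ContinuousAt (fun q : ℝ × ℝ => V.flux q.1 q.2) (r, t) := by
  obtain ⟨_, _, _, _, h1, h2, _⟩ := V.conservation hp (t := t) hr
  exact ⟨h1.continuousAt, h2.continuousAt⟩

theorem integral_rpow_le {ρ R q : ℝ} (hρ : 0 < ρ) (hR : ρ ≤ R) (hq : 1 < q) :
    ∫ r in ρ..R, r ^ (-q) ≤ ρ ^ (1 - q) / (q - 1) := by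
  rw [integral_rpow (Or.inr ⟨by linarith, by
    rw [uIcc_of_le hR]; exact fun h => absurd h.1 (not_le.2 hρ)⟩)]
  have : 0 ≤ R ^ (-q + 1) := Real.rpow_nonneg (by linarith) _
  rw [show -q + 1 = 1 - q by ring] at *
  rw [← neg_div_neg_eq, neg_sub, neg_sub]
  exact div_le_div_of_nonneg_right (by linarith) (by linarith)

/-- Young's inequality with exponents `(p+1)/p` and `p+1` for the nonlinear term. The free weights
`ρ^{−β}` and `ρ^{βp}` cancel in the geometric mean; both resulting terms integrate to a multiple of
`ρ^{−β}` over `r ≥ ρ`. -/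
theorem nonlinear_bound {r ρ β x : ℝ} (hr : 0 < r) (hρ : 0 < ρ) (hp : 1 < p) (hx : 0 ≤ x) (n : ℕ) :
    r ^ ((n : ℝ) / 2) * x ^ p ≤ ρ ^ (-β) * p * (r ^ n * (x ^ (p + 1) / (p + 1)))
      + ρ ^ (β * p) * r ^ (-(n * (p - 1) / 2)) := by
  have hp1 : 0 < p + 1 := by linarith
  have h := Real.geom_mean_le_arith_mean2_weighted (w₁ := p / (p + 1)) (w₂ := 1 / (p + 1))
    (p₁ := ρ ^ (-β) * (r ^ n * x ^ (p + 1))) (p₂ := ρ ^ (β * p) * r ^ (-(n * (p - 1) / 2)))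
    (by positivity) (by positivity) (by positivity) (by positivity) (by field_simp)
  have e : (ρ ^ (-β) * (r ^ n * x ^ (p + 1))) ^ (p / (p + 1))
      * (ρ ^ (β * p) * r ^ (-(n * (p - 1) / 2))) ^ (1 / (p + 1)) = r ^ ((n : ℝ) / 2) * x ^ p := by
    rw [Real.mul_rpow (by positivity) (by positivity), Real.mul_rpow (by positivity) (by positivity),
      Real.mul_rpow (by positivity) (by positivity), ← Real.rpow_natCast r n,
      ← Real.rpow_mul hρ.le, ← Real.rpow_mul hρ.le, ← Real.rpow_mul hr.le, ← Real.rpow_mul hr.le,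
      ← Real.rpow_mul hx]
    have e1 : (p + 1) * (p / (p + 1)) = p := by field_simp
    have e2 : ρ ^ (-β * (p / (p + 1))) * ρ ^ (β * p * (1 / (p + 1))) = 1 := by
      rw [← Real.rpow_add hρ, show -β * (p / (p + 1)) + β * p * (1 / (p + 1)) = 0 by ring,
        Real.rpow_zero]
    have e3 : r ^ ((n : ℝ) * (p / (p + 1))) * r ^ (-(n * (p - 1) / 2) * (1 / (p + 1)))
        = r ^ ((n : ℝ) / 2) := by
      rw [← Real.rpow_add hr]
      congr 1
      field_simp
      ring
    rw [e1, ← e3]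
    linear_combination (r ^ ((n : ℝ) * (p / (p + 1))) * x ^ p *
      r ^ (-(n * (p - 1) / 2) * (1 / (p + 1)))) * e2
  rw [e] at h
  refine h.trans (add_le_add (le_of_eq (by ring)) ?_)
  have h0 : 0 ≤ ρ ^ (β * p) * r ^ (-(n * (p - 1) / 2)) := by positivity
  have h1 : 1 / (p + 1) ≤ 1 := by rw [div_le_one hp1]; linarith
  nlinarith

/-- The inequality `2xy ≤ ρ^{−β}x² + ρ^β y²` applied to the inverse-square term. -/
theorem linear_bound {r ρ β x : ℝ} (hr : 0 < r) (hρ : 0 < ρ) (n : ℕ) :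
    r ^ ((n : ℝ) / 2) * (x / r ^ 2) ≤ (ρ ^ (-β) * (r ^ n * (x ^ 2 / r ^ 2))
      + ρ ^ β * r ^ (-2 : ℝ)) / 2 := by
  have e1 : ρ ^ (-β) * ρ ^ β = 1 := by
    rw [← Real.rpow_add hρ, neg_add_cancel, Real.rpow_zero]
  have e2 : r ^ n = (r ^ ((n : ℝ) / 2)) ^ 2 := by
    rw [← Real.rpow_natCast (r ^ ((n : ℝ) / 2)), ← Real.rpow_mul hr.le, ← Real.rpow_natCast]
    congr 1
    push_cast
    ring
  have e3 : r ^ (-2 : ℝ) = (1 / r) ^ 2 := by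
    rw [Real.rpow_neg hr.le]
    norm_cast
    rw [one_div, inv_pow]
  have hA : 0 < ρ ^ (-β) := Real.rpow_pos_of_pos hρ _
  rw [e2, e3]
  set X := r ^ ((n : ℝ) / 2) * (x / r) with hX
  have l1 : r ^ ((n : ℝ) / 2) * (x / r ^ 2) = X * (1 / r) := by rw [hX]; field_simp
  have l2 : (r ^ ((n : ℝ) / 2)) ^ 2 * (x ^ 2 / r ^ 2) = X ^ 2 := by rw [hX]; field_simp
  rw [l1, l2]
  have hB : ρ ^ β = (ρ ^ (-β))⁻¹ := by rw [Real.rpow_neg hρ.le, inv_inv]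
  rw [hB]
  set A := ρ ^ (-β)
  have : 0 ≤ A * (X - A⁻¹ * (1 / r)) ^ 2 := by positivity
  have e4 : A * (X - A⁻¹ * (1 / r)) ^ 2 = A * X ^ 2 + A⁻¹ * (1 / r) ^ 2 - 2 * (X * (1 / r)) := by
    field_simp
    ring
  linarith

/-- The constant in the variation estimate; `M` bounds the radial energy, that is, the integral of
`dens` over `r > 0`. -/
def varConst (n : ℕ) (a p β M : ℝ) : ℝ :=
  (p + |a + n * (n - 2) / 4| / (a + (((n : ℝ) - 1) / 2) ^ 2)) * M + 1 / (β * (p + 1))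
    + |a + n * (n - 2) / 4|

/-- The variation of `∂ₜw + ∂ᵣw` along the incoming characteristic `r = s − t`: the integral of its
derivative is controlled by the energy flux through the characteristic and by powers of `r` that are
integrable at infinity. -/
theorem variation (hp : 1 < p) (ha : 0 < a + (((n : ℝ) - 1) / 2) ^ 2) {β M : ℝ}
    (hβ : β * (p + 1) = n * (p - 1) / 2 - 1) (hβ0 : 0 < β) (hβ1 : β < 1 / 2)
    (hInt : ∀ t, IntegrableOn (fun r => V.dens r t) (Ioi 0))
    (hM : ∀ t, ∫ r in Ioi 0, V.dens r t ≤ M) {s t₁ t₂ : ℝ} (h12 : t₁ < t₂) (h2 : t₂ < s - 1) :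
    |V.W (s - t₂) t₂ - V.W (s - t₁) t₁| ≤ varConst n a p β M * (s - t₂) ^ (-β) := by
  set κ := a + (((n : ℝ) - 1) / 2) ^ 2 with hκ
  set μ := a + (n : ℝ) * (n - 2) / 4 with hμ
  set ρ := s - t₂ with hρdef
  have hρ1 : 1 < ρ := by linarith
  have hρ : 0 < ρ := by linarith
  have hpos : ∀ t ∈ Icc t₁ t₂, 0 < s - t := fun t ht => by linarith [ht.2]
  have hpos2 : ∀ t ∈ Icc t₁ t₂, 0 < s - t + 2 * (t - t₁) := fun t ht => by
    linarith [ht.2, ht.1]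
  let F : ℝ → ℝ := fun t => (V.dens (s - t) t - V.flux (s - t) t)
        + (V.dens (s - t + 2 * (t - t₁)) t + V.flux (s - t + 2 * (t - t₁)) t)
  -- `F` also contains the flux through the outgoing leg, which is nonnegative: this makes the
  -- integral of `F` exactly the quantity in `triangle`.
  let φ : ℝ → ℝ := fun t => ρ ^ (-β) * (p + |μ| / κ) * F t
    + ρ ^ (β * p) * (s - t) ^ (-(n * (p - 1) / 2)) + |μ| * ρ ^ β * (s - t) ^ (-2 : ℝ)
  have hbound : ∀ t ∈ Icc t₁ t₂, |(-((s - t) ^ ((n : ℝ) / 2) * (|V.v (s - t) t| ^ (p - 1) * V.v (s - t) t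
        + μ * V.v (s - t) t / (s - t) ^ 2)))| ≤ φ t := by
    intro t ht
    have hr := hpos t ht
    have hF1 := V.dens_sub_flux (s - t) t hr
    have hF2 := V.dens_add_flux (s - t + 2 * (t - t₁)) t (hpos2 t ht)
    have hF2' : 0 ≤ V.dens (s - t + 2 * (t - t₁)) t + V.flux (s - t + 2 * (t - t₁)) t := by
      refine le_trans ?_ hF2
      have := hpos2 t ht
      positivity
    set r := s - t with hrdef
    set x := |V.v r t| with hx
    have hx0 : 0 ≤ x := abs_nonneg _
    have hF : r ^ n * (κ / 2 * x ^ 2 / r ^ 2 + x ^ (p + 1) / (p + 1)) ≤ F t := by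
      rw [hx, sq_abs]; simp only [F]; rw [← hrdef]; linarith
    have hn := nonlinear_bound (β := β) hr hρ hp hx0 n
    have hl := linear_bound (β := β) (x := x) hr hρ n
    have hxp : x ^ (p - 1) * x = x ^ p := by
      rcases hx0.eq_or_lt with h | h
      · rw [← h, Real.zero_rpow (by linarith : p ≠ 0)]; simp
      · rw [Real.rpow_sub_one h.ne']; field_simp
    have habs : |(-(r ^ ((n : ℝ) / 2) * (x ^ (p - 1) * V.v r t + μ * V.v r t / r ^ 2)))|
        ≤ r ^ ((n : ℝ) / 2) * x ^ p + |μ| * (r ^ ((n : ℝ) / 2) * (x / r ^ 2)) := by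
      rw [abs_neg, abs_mul, abs_of_pos (Real.rpow_pos_of_pos hr _)]
      have h1 : |x ^ (p - 1) * V.v r t + μ * V.v r t / r ^ 2| ≤ x ^ p + |μ| * x / r ^ 2 := by
        refine (abs_add_le _ _).trans (le_of_eq ?_)
        rw [abs_mul, abs_div, abs_mul, abs_of_nonneg (Real.rpow_nonneg hx0 _), ← hx, hxp,
          abs_of_pos (by positivity : 0 < r ^ 2)]
      calc _ ≤ r ^ ((n : ℝ) / 2) * (x ^ p + |μ| * x / r ^ 2) :=
            mul_le_mul_of_nonneg_left h1 (by positivity)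
        _ = _ := by ring
    refine habs.trans ?_
    have hl' := mul_le_mul_of_nonneg_left hl (abs_nonneg μ)
    set A := ρ ^ (-β) with hA
    have hApos : 0 < A := Real.rpow_pos_of_pos hρ _
    have hB : 0 ≤ ρ ^ β * r ^ (-2 : ℝ) := by positivity
    have hcoef : A * (p + |μ| / κ) * (r ^ n * (κ / 2 * x ^ 2 / r ^ 2 + x ^ (p + 1) / (p + 1)))
        ≤ A * (p + |μ| / κ) * F t := mul_le_mul_of_nonneg_left hF (by positivity)
    have hexp : A * (p + |μ| / κ) * (r ^ n * (κ / 2 * x ^ 2 / r ^ 2 + x ^ (p + 1) / (p + 1)))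
        = A * p * (r ^ n * (x ^ (p + 1) / (p + 1))) + |μ| * (A * (r ^ n * (x ^ 2 / r ^ 2))) / 2
          + (A * p * (r ^ n * (κ / 2 * x ^ 2 / r ^ 2))
            + A * (|μ| / κ) * (r ^ n * (x ^ (p + 1) / (p + 1)))) := by
      field_simp
      ring
    have hrest : 0 ≤ A * p * (r ^ n * (κ / 2 * x ^ 2 / r ^ 2))
            + A * (|μ| / κ) * (r ^ n * (x ^ (p + 1) / (p + 1))) := by positivity
    have hmB : 0 ≤ |μ| * (ρ ^ β * r ^ (-2 : ℝ)) := by positivity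
    simp only [φ]
    rw [← hA, ← hrdef]
    linarith
  have hFc : ContinuousOn F (Icc t₁ t₂) := by
    intro t ht
    obtain ⟨c1, c2⟩ := V.continuousAt_dens_flux hp (t := t) (hpos t ht)
    obtain ⟨c3, c4⟩ := V.continuousAt_dens_flux hp (t := t) (hpos2 t ht)
    have d1 : ContinuousAt (fun t : ℝ => (s - t, t)) t := by fun_prop
    have d2 : ContinuousAt (fun t : ℝ => (s - t + 2 * (t - t₁), t)) t := by fun_prop
    exact (((c1.comp (f := fun t : ℝ => (s - t, t)) d1).sub
      (c2.comp (f := fun t : ℝ => (s - t, t)) d1)).add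
      ((c3.comp (f := fun t : ℝ => (s - t + 2 * (t - t₁), t)) d2).add
      (c4.comp (f := fun t : ℝ => (s - t + 2 * (t - t₁), t)) d2))).continuousWithinAt
  have hpc : ∀ q : ℝ, ContinuousOn (fun t => (s - t) ^ q) (Icc t₁ t₂) := fun q =>
    ContinuousOn.rpow_const (by fun_prop) (fun t ht => Or.inl (hpos t ht).ne')
  have hφc : ContinuousOn φ (Icc t₁ t₂) :=
    ((continuousOn_const.mul hFc).add (continuousOn_const.mul (hpc _))).add
      (continuousOn_const.mul (hpc _))
  have hder : ∀ t ∈ Icc t₁ t₂, HasDerivAt (fun t => V.W (s - t) t) _ t :=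
    fun t ht => V.hasDerivAt_W (sub_pos.1 (hpos t ht))
  have hWc : ContinuousOn (fun t => V.W (s - t) t) (Icc t₁ t₂) :=
    fun t ht => (hder t ht).continuousAt.continuousWithinAt
  have hup := intervalIntegral.sub_le_integral_of_hasDeriv_right_of_le h12.le hWc
    (fun t ht => (hder t (Ioo_subset_Icc_self ht)).hasDerivWithinAt)
    (hφc.integrableOn_Icc) (fun t ht => (le_abs_self _).trans (hbound t (Ioo_subset_Icc_self ht)))
  have hlo := intervalIntegral.sub_le_integral_of_hasDeriv_right_of_le h12.le hWc.neg
    (fun t ht => (hder t (Ioo_subset_Icc_self ht)).neg.hasDerivWithinAt)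
    (hφc.integrableOn_Icc) (fun t ht => (neg_le_abs _).trans (hbound t (Ioo_subset_Icc_self ht)))
  have habs : |V.W ρ t₂ - V.W (s - t₁) t₁| ≤ ∫ t in t₁..t₂, φ t := by
    simp only [Pi.neg_apply] at hlo
    rw [abs_le]
    constructor <;> linarith
  refine habs.trans ?_
  have ii : ∀ {f : ℝ → ℝ}, ContinuousOn f (Icc t₁ t₂) → IntervalIntegrable f volume t₁ t₂ :=
    fun h => ContinuousOn.intervalIntegrable (by rwa [uIcc_of_le h12.le])
  have hφ : ∫ t in t₁..t₂, φ t = ρ ^ (-β) * (p + |μ| / κ) * (∫ t in t₁..t₂, F t)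
      + ρ ^ (β * p) * (∫ r in ρ..(s - t₁), r ^ (-(n * (p - 1) / 2)))
      + |μ| * ρ ^ β * (∫ r in ρ..(s - t₁), r ^ (-2 : ℝ)) := by
    simp only [φ]
    rw [intervalIntegral.integral_add (((ii hFc).const_mul _).add ((ii (hpc _)).const_mul _))
      ((ii (hpc _)).const_mul _), intervalIntegral.integral_add ((ii hFc).const_mul _)
      ((ii (hpc _)).const_mul _)]
    simp only [intervalIntegral.integral_const_mul]
    rw [intervalIntegral.integral_comp_sub_left (fun r => r ^ (-(n * (p - 1) / 2))) s,
      intervalIntegral.integral_comp_sub_left (fun r => r ^ (-2 : ℝ)) s]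
  have hFM : ∫ t in t₁..t₂, F t ≤ M := by
    simp only [F]
    rw [V.triangle hp h12 (by linarith), intervalIntegral.integral_of_le (by linarith)]
    refine le_trans (setIntegral_mono_set (hInt t₂) ?_ ?_) (hM t₂)
    · exact (ae_restrict_iff' measurableSet_Ioi).2
        (Eventually.of_forall fun r hr => V.dens_nonneg hp ha r t₂ hr)
    · exact LE.le.eventuallyLE (fun r hr => lt_trans hρ hr.1)
  -- This choice of `β` makes the decay from `r^{-n(p-1)/2}` match `ρ^{-β}`.
  have hγ : n * (p - 1) / 2 = β * (p + 1) + 1 := by linarith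
  have hp1 : 0 < p + 1 := by linarith
  have hI1 := integral_rpow_le hρ (show ρ ≤ s - t₁ by linarith)
    (show 1 < n * (p - 1) / 2 by rw [hγ]; nlinarith)
  have hI2 := integral_rpow_le hρ (show ρ ≤ s - t₁ by linarith) (show (1 : ℝ) < 2 by norm_num)
  have hJ1 : ρ ^ (β * p) * (∫ r in ρ..(s - t₁), r ^ (-(n * (p - 1) / 2)))
      ≤ 1 / (β * (p + 1)) * ρ ^ (-β) := by
    refine (mul_le_mul_of_nonneg_left hI1 (by positivity)).trans (le_of_eq ?_)
    rw [hγ, ← mul_div_assoc, ← Real.rpow_add hρ]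
    rw [show β * p + (1 - (β * (p + 1) + 1)) = -β by ring, add_sub_cancel_right]
    ring
  have hJ2 : |μ| * ρ ^ β * (∫ r in ρ..(s - t₁), r ^ (-2 : ℝ)) ≤ |μ| * ρ ^ (-β) := by
    rw [mul_assoc]
    refine mul_le_mul_of_nonneg_left ?_ (abs_nonneg μ)
    refine (mul_le_mul_of_nonneg_left hI2 (by positivity)).trans ?_
    rw [← mul_div_assoc, ← Real.rpow_add hρ]
    norm_num
    exact Real.rpow_le_rpow_of_exponent_le hρ1.le (by linarith)
  have hJ0 : ρ ^ (-β) * (p + |μ| / κ) * (∫ t in t₁..t₂, F t) ≤ ρ ^ (-β) * (p + |μ| / κ) * M :=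
    mul_le_mul_of_nonneg_left hFM (by positivity)
  rw [hφ, varConst, ← hκ, ← hμ]
  linarith

end RadialWave

/-! ### Radial functions on Euclidean space -/

section Radial

variable {d : ℕ}

theorem hasFDerivAt_norm_euclidean {x : EuclideanSpace ℝ (Fin d)} (hx : x ≠ 0) :
    HasFDerivAt (fun y : EuclideanSpace ℝ (Fin d) => ‖y‖) (‖x‖⁻¹ • innerSL ℝ x) x := by
  have h1 := (hasStrictFDerivAt_norm_sq x).hasFDerivAt
  have h2 := h1.sqrt (by simpa using hx)
  simp only [Real.sqrt_sq (norm_nonneg _)] at h2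
  refine h2.congr_fderiv ?_
  rw [← Nat.cast_smul_eq_nsmul ℝ, smul_smul]
  congr 1
  have : ‖x‖ ≠ 0 := by simpa using hx
  push_cast
  field_simp

theorem hasFDerivAt_radial {f : EuclideanSpace ℝ (Fin d) → ℝ} {h h' : ℝ → ℝ}
    (hf : ∀ y, f y = h ‖y‖) (hh : ∀ ρ, 0 < ρ → HasDerivAt h (h' ρ) ρ)
    {x : EuclideanSpace ℝ (Fin d)} (hx : x ≠ 0) :
    HasFDerivAt f ((h' ‖x‖ / ‖x‖) • innerSL ℝ x) x := by
  have h1 := (hh ‖x‖ (by simpa using hx)).comp_hasFDerivAt x (hasFDerivAt_norm_euclidean hx)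
  rw [smul_smul, ← div_eq_mul_inv] at h1
  exact h1.congr_of_eventuallyEq (Eventually.of_forall hf)

theorem norm_gradient_radial {f : EuclideanSpace ℝ (Fin d) → ℝ} {h h' : ℝ → ℝ}
    (hf : ∀ y, f y = h ‖y‖) (hh : ∀ ρ, 0 < ρ → HasDerivAt h (h' ρ) ρ)
    {x : EuclideanSpace ℝ (Fin d)} (hx : x ≠ 0) :
    ‖gradient f x‖ ^ 2 = h' ‖x‖ ^ 2 := by
  have : ‖x‖ ≠ 0 := by simpa using hx
  rw [gradient, (hasFDerivAt_radial hf hh hx).fderiv, LinearIsometryEquiv.norm_map, norm_smul,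
    innerSL_apply_norm, mul_pow, Real.norm_eq_abs, sq_abs]
  field_simp

/-- The Laplacian of a radial function: `Δf = h'' + (d−1)/r · h'` at `r = ‖x‖`. -/
theorem lap_radial {f : EuclideanSpace ℝ (Fin d) → ℝ} {h h' h'' : ℝ → ℝ}
    (hf : ∀ y, f y = h ‖y‖) (hh : ∀ ρ, 0 < ρ → HasDerivAt h (h' ρ) ρ)
    (hh' : ∀ ρ, 0 < ρ → HasDerivAt h' (h'' ρ) ρ)
    {x : EuclideanSpace ℝ (Fin d)} (hx : x ≠ 0) :
    lap f x = h'' ‖x‖ + (d - 1) / ‖x‖ * h' ‖x‖ := by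
  have hx0 : 0 < ‖x‖ := by simpa using hx
  have hx0' := hx0.ne'
  have hev : ∀ᶠ y in nhds x, y ≠ 0 := isOpen_ne.mem_nhds hx
  have hterm : ∀ i : Fin d, fderiv ℝ (fun y => fderiv ℝ f y (EuclideanSpace.single i 1)) x
      (EuclideanSpace.single i 1)
      = h' ‖x‖ / ‖x‖ + (h'' ‖x‖ * ‖x‖ - h' ‖x‖) / ‖x‖ ^ 3 * x i ^ 2 := by
    intro i
    have h1 : (fun y => fderiv ℝ f y (EuclideanSpace.single i 1))
        =ᶠ[nhds x] fun y => h' ‖y‖ / ‖y‖ * y i := by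
      filter_upwards [hev] with y hy
      rw [(hasFDerivAt_radial hf hh hy).fderiv]
      simp [EuclideanSpace.inner_single_right]
    have hk : HasFDerivAt (fun y : EuclideanSpace ℝ (Fin d) => h' ‖y‖ / ‖y‖) _ x :=
      hasFDerivAt_radial (h := fun ρ => h' ρ / ρ)
        (h' := fun ρ => (h'' ρ * ρ - h' ρ * 1) / ρ ^ 2) (fun y => rfl)
        (fun ρ hρ => (hh' ρ hρ).div (hasDerivAt_id ρ) hρ.ne') hx
    have hi : HasFDerivAt (fun y : EuclideanSpace ℝ (Fin d) => y i)
        (EuclideanSpace.proj i : EuclideanSpace ℝ (Fin d) →L[ℝ] ℝ) x :=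
      (EuclideanSpace.proj i : EuclideanSpace ℝ (Fin d) →L[ℝ] ℝ).hasFDerivAt
    rw [show fderiv ℝ _ x = _ from h1.fderiv_eq.trans (hk.mul hi).fderiv]
    simp [EuclideanSpace.inner_single_right]
    field_simp
  unfold lap
  rw [Finset.sum_congr rfl (fun i _ => hterm i), Finset.sum_add_distrib, ← Finset.mul_sum,
    ← EuclideanSpace.real_norm_sq_eq]
  simp
  field_simp
  ring

/-- If `G/r` and `G'` are integrable on `(0,∞)`, then `G'` has integral zero, i.e. there are no
boundary terms at `0` or `∞`. In the variable `x = log r` the hypotheses say that `G ∘ exp` and its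
derivative are integrable on `ℝ`. -/
theorem integral_deriv_eq_zero {G G' : ℝ → ℝ} (hG : ∀ r, 0 < r → HasDerivAt G (G' r) r)
    (hi : IntegrableOn (fun r => G r / r) (Ioi 0)) (hi' : IntegrableOn G' (Ioi 0)) :
    ∫ r in Ioi 0, G' r = 0 := by
  have himg : Real.exp '' univ = Ioi 0 := by rw [image_univ, Real.range_exp]
  have hd : ∀ x ∈ (univ : Set ℝ), HasDerivWithinAt Real.exp (Real.exp x) univ x :=
    fun x _ => (Real.hasDerivAt_exp x).hasDerivWithinAt
  rw [← himg] at hi hi' ⊢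
  rw [integrableOn_image_iff_integrableOn_abs_deriv_smul MeasurableSet.univ hd
    Real.exp_injective.injOn, integrableOn_univ] at hi hi'
  rw [integral_image_eq_integral_abs_deriv_smul MeasurableSet.univ hd Real.exp_injective.injOn]
  simp only [Real.abs_exp, smul_eq_mul, setIntegral_univ] at *
  refine integral_eq_zero_of_hasDerivAt_of_integrable (f := fun x => G (Real.exp x)) ?_ hi' ?_
  · intro x
    rw [mul_comm]
    exact (hG _ (Real.exp_pos x)).comp x (Real.hasDerivAt_exp x)
  · refine hi.congr (Eventually.of_forall fun x => ?_)
    dsimp only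
    field_simp

end Radial

/-! ### From solutions on `ℝ^d` to the radial equation -/

section FromSol

variable {n : ℕ} {a p : ℝ}

/-- The profile is `C²` for `r > 0`, being the restriction of `u` to a ray. -/
theorem contDiffAt_rad (S : Sol (n + 1) a p) {q : ℝ × ℝ} (hq : 0 < q.1) :
    ContDiffAt ℝ 2 (fun q : ℝ × ℝ => S.rad q.1 q.2) q := by
  let e : EuclideanSpace ℝ (Fin (n + 1)) := EuclideanSpace.single 0 1
  have he : ‖e‖ = 1 := by simp [e]
  have he0 : e ≠ 0 := by
    intro h
    rw [h] at he
    simp at he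
  let j : ℝ × ℝ → EuclideanSpace ℝ (Fin (n + 1)) × ℝ := fun q => (q.1 • e, q.2)
  have hj : ContDiff ℝ 2 j := (contDiff_fst.smul contDiff_const).prodMk contDiff_snd
  have hopen : IsOpen {q : EuclideanSpace ℝ (Fin (n + 1)) × ℝ | q.1 ≠ 0} :=
    isOpen_ne.preimage continuous_fst
  have hu := (S.smooth.contDiffAt (hopen.mem_nhds
    (show j q ∈ _ from smul_ne_zero hq.ne' he0))).comp q hj.contDiffAt
  refine hu.congr_of_eventuallyEq ?_
  filter_upwards [(isOpen_Ioi.preimage continuous_fst).mem_nhds (show q ∈ Prod.fst ⁻¹' Ioi 0 from hq)]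
    with z hz
  simp only [Function.comp, j, S.u_eq_rad, norm_smul, he, mul_one, Real.norm_eq_abs]
  rw [abs_of_pos hz]

theorem eq_fst_add_snd (L : ℝ × ℝ →L[ℝ] ℝ) : L = L (1, 0) • ContinuousLinearMap.fst ℝ ℝ ℝ
    + L (0, 1) • ContinuousLinearMap.snd ℝ ℝ ℝ := by
  ext <;> simp

theorem hasDerivAt_fst_slice {g : ℝ → ℝ → ℝ} {A B r t : ℝ}
    (h : HasFDerivAt (fun q : ℝ × ℝ => g q.1 q.2)
      (A • ContinuousLinearMap.fst ℝ ℝ ℝ + B • ContinuousLinearMap.snd ℝ ℝ ℝ) (r, t)) :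
    HasDerivAt (fun ρ => g ρ t) A r := by
  have := h.comp_hasDerivAt (f := fun ρ : ℝ => (ρ, t)) r
    ((hasDerivAt_id r).prodMk (hasDerivAt_const r t))
  exact this.congr_deriv (by simp)

theorem hasDerivAt_snd_slice {g : ℝ → ℝ → ℝ} {A B r t : ℝ}
    (h : HasFDerivAt (fun q : ℝ × ℝ => g q.1 q.2)
      (A • ContinuousLinearMap.fst ℝ ℝ ℝ + B • ContinuousLinearMap.snd ℝ ℝ ℝ) (r, t)) :
    HasDerivAt (g r) B t := by
  have := h.comp_hasDerivAt (f := fun τ : ℝ => (r, τ)) t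
    ((hasDerivAt_const t r).prodMk (hasDerivAt_id t))
  exact this.congr_deriv (by simp)

/-- The radial profile of a solution in dimension `n + 1` solves the radial equation. -/
theorem exists_radialWave (S : Sol (n + 1) a p) : ∃ V : RadialWave n a p, V.v = S.rad := by
  let g : ℝ × ℝ → ℝ := fun q => S.rad q.1 q.2
  let g2 : ℝ × ℝ → (ℝ × ℝ →L[ℝ] ℝ × ℝ →L[ℝ] ℝ) := fun q => fderiv ℝ (fderiv ℝ g) q
  have hg : ∀ q : ℝ × ℝ, 0 < q.1 → HasFDerivAt g (fderiv ℝ g q) q := fun q hq =>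
    ((contDiffAt_rad S hq).differentiableAt (by norm_num)).hasFDerivAt
  have hg2 : ∀ q : ℝ × ℝ, 0 < q.1 → HasFDerivAt (fderiv ℝ g) (g2 q) q := fun q hq =>
    (((contDiffAt_rad S hq).fderiv_right (m := 1) (by norm_num)).differentiableAt
      (by norm_num)).hasFDerivAt
  have hsymm : ∀ q : ℝ × ℝ, 0 < q.1 → g2 q (0, 1) (1, 0) = g2 q (1, 0) (0, 1) := fun q hq =>
    (contDiffAt_rad S hq).isSymmSndFDerivAt (by simp) (0, 1) (1, 0)
  have happ : ∀ (q w : ℝ × ℝ), 0 < q.1 → HasFDerivAt (fun q => fderiv ℝ g q w)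
      (g2 q (1, 0) w • ContinuousLinearMap.fst ℝ ℝ ℝ
        + g2 q (0, 1) w • ContinuousLinearMap.snd ℝ ℝ ℝ) q := by
    intro q w hq
    refine ((hg2 q hq).clm_apply (hasFDerivAt_const w q)).congr_fderiv ?_
    refine (eq_fst_add_snd _).trans ?_
    simp
  have hv : ∀ r t : ℝ, 0 < r → HasFDerivAt g (fderiv ℝ g (r, t) (1, 0) •
      ContinuousLinearMap.fst ℝ ℝ ℝ + fderiv ℝ g (r, t) (0, 1) • ContinuousLinearMap.snd ℝ ℝ ℝ)
      (r, t) := fun r t hr => (hg (r, t) hr).congr_fderiv (eq_fst_add_snd _)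
  have hvt : ∀ r t : ℝ, 0 < r → HasFDerivAt (fun q => fderiv ℝ g q (0, 1))
      (g2 (r, t) (0, 1) (1, 0) • ContinuousLinearMap.fst ℝ ℝ ℝ
        + g2 (r, t) (0, 1) (0, 1) • ContinuousLinearMap.snd ℝ ℝ ℝ) (r, t) := by
    intro r t hr
    rw [hsymm (r, t) hr]
    exact happ (r, t) (0, 1) hr
  refine ⟨{ v := S.rad
            vr := fun r t => fderiv ℝ g (r, t) (1, 0)
            vt := fun r t => fderiv ℝ g (r, t) (0, 1)
            vrr := fun r t => g2 (r, t) (1, 0) (1, 0)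
            vrt := fun r t => g2 (r, t) (0, 1) (1, 0)
            vtt := fun r t => g2 (r, t) (0, 1) (0, 1)
            hv := hv
            hvr := fun r t hr => happ (r, t) (1, 0) hr
            hvt := hvt
            eqn := ?_ }, rfl⟩
  intro r t hr
  let x : EuclideanSpace ℝ (Fin (n + 1)) := EuclideanSpace.single 0 r
  have hx : ‖x‖ = r := by simp [x, abs_of_pos hr]
  have hx0 : x ≠ 0 := by
    intro h
    rw [h] at hx
    simp at hx
    exact hr.ne hx
  have hpde := S.pde x t hx0
  have hux : S.u x = S.rad r := by
    funext τ
    rw [S.u_eq_rad, hx]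
  have hlap := lap_radial (f := fun y => S.u y t) (h := fun ρ => S.rad ρ t)
    (h' := fun ρ => fderiv ℝ g (ρ, t) (1, 0)) (h'' := fun ρ => g2 (ρ, t) (1, 0) (1, 0))
    (fun y => S.u_eq_rad y t) (fun ρ hρ => hasDerivAt_fst_slice (hv ρ t hρ))
    (fun ρ hρ => hasDerivAt_fst_slice (g := fun r t => fderiv ℝ g (r, t) (1, 0))
      (happ (ρ, t) (1, 0) hρ)) hx0
  have hd1 : deriv (S.rad r) = fun τ => fderiv ℝ g (r, τ) (0, 1) :=
    funext fun τ => (hasDerivAt_snd_slice (hv r τ hr)).deriv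
  have hd2 : deriv (deriv (S.rad r)) t = g2 (r, t) (0, 1) (0, 1) := by
    rw [hd1]
    exact (hasDerivAt_snd_slice (g := fun r t => fderiv ℝ g (r, t) (0, 1)) (hvt r t hr)).deriv
  rw [hlap, hux, hd2, hx] at hpde
  rw [← hpde]
  push_cast
  ring

/-- In polar coordinates the energy is, up to the area of the unit sphere, the integral of the
Hardy-completed density: the difference of the two radial densities is
`(n−1)/4 · ∂ᵣ(r^{n−1}v²)`, whose integral vanishes by `integral_deriv_eq_zero`. -/
theorem energy_eq (hn : 1 ≤ n) (hp : 1 < p) (S : Sol (n + 1) a p) (V : RadialWave n a p)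
    (hV : V.v = S.rad) (t : ℝ) :
    IntegrableOn (fun r => V.dens r t) (Ioi 0) ∧
    S.energy = ((n + 1 : ℕ) : ℝ) *
      ((volume : Measure (EuclideanSpace ℝ (Fin (n + 1)))).real (ball 0 1) *
      ∫ r in Ioi 0, V.dens r t) := by
  have hvr : ∀ r, 0 < r → HasDerivAt (fun ρ => V.v ρ t) (V.vr r t) r :=
    fun r hr => hasDerivAt_fst_slice (V.hv r t hr)
  have hc : ContinuousOn (fun r => V.v r t) (Ioi 0) :=
    fun r hr => (hvr r hr).continuousAt.continuousWithinAt
  have hcr : ContinuousOn (fun r => V.vr r t) (Ioi 0) :=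
    fun r hr => (hasDerivAt_fst_slice (V.hvr r t hr)).continuousAt.continuousWithinAt
  have hct : ContinuousOn (fun r => V.vt r t) (Ioi 0) :=
    fun r hr => (hasDerivAt_fst_slice (V.hvt r t hr)).continuousAt.continuousWithinAt
  have hid : ContinuousOn (fun r : ℝ => r⁻¹) (Ioi 0) :=
    continuousOn_inv₀.mono fun r hr => (ne_of_gt hr : r ≠ 0)
  -- `f` is the density whose integrability is assumed, `e` the radial energy density without `r ^ n`.
  let f : ℝ → ℝ := fun r => V.vr r t ^ 2 + V.v r t ^ 2 / r ^ 2 + V.vt r t ^ 2 + |V.v r t| ^ (p + 1)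
  let e : ℝ → ℝ := fun r => 1 / 2 * V.vr r t ^ 2 + a / 2 * V.v r t ^ 2 / r ^ 2
    + 1 / 2 * V.vt r t ^ 2 + 1 / (p + 1) * |V.v r t| ^ (p + 1)
  have hae : ∀ᵐ x : EuclideanSpace ℝ (Fin (n + 1)), x ≠ 0 := by
    simp [ae_iff]
  have hgrad : ∀ x : EuclideanSpace ℝ (Fin (n + 1)), x ≠ 0 →
      ‖gradient (fun y => S.u y t) x‖ ^ 2 = V.vr ‖x‖ t ^ 2 ∧ S.u x t = V.v ‖x‖ t ∧
      deriv (S.u x) t = V.vt ‖x‖ t := by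
    intro x hx
    have hx0 : 0 < ‖x‖ := by simpa using hx
    have hu : ∀ (y : EuclideanSpace ℝ (Fin (n + 1))) (τ : ℝ), S.u y τ = V.v ‖y‖ τ :=
      fun y τ => by rw [hV, S.u_eq_rad]
    refine ⟨norm_gradient_radial (h := fun ρ => V.v ρ t) (h' := fun ρ => V.vr ρ t)
      (fun y => hu y t) hvr hx, hu x t, ?_⟩
    rw [show S.u x = V.v ‖x‖ from funext fun τ => hu x τ]
    exact (hasDerivAt_snd_slice (V.hv ‖x‖ t hx0)).deriv
  have hf : IntegrableOn (fun r => r ^ n * f r) (Ioi 0) := by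
    have h1 : Integrable (fun x : EuclideanSpace ℝ (Fin (n + 1)) => f ‖x‖) := by
      refine (S.finite t).congr ?_
      filter_upwards [hae] with x hx
      obtain ⟨h1, h2, h3⟩ := hgrad x hx
      simp only [f]
      rw [h1, h2, h3]
    rw [integrable_fun_norm_addHaar] at h1
    simpa using h1
  have hE : S.energy = ((n + 1 : ℕ) : ℝ) *
      ((volume : Measure (EuclideanSpace ℝ (Fin (n + 1)))).real (ball 0 1) *
      ∫ r in Ioi 0, r ^ n * e r) := by
    have h1 : S.energy = ∫ x : EuclideanSpace ℝ (Fin (n + 1)), e ‖x‖ := by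
      rw [S.energy_def t]
      refine integral_congr_ae ?_
      filter_upwards [hae] with x hx
      obtain ⟨h1, h2, h3⟩ := hgrad x hx
      simp only [e]
      rw [h1, h2, h3]
    rw [h1, integral_fun_norm_addHaar]
    simp
  have hdom : ∀ (g : ℝ → ℝ) (K : ℝ), ContinuousOn g (Ioi 0) →
      (∀ r, 0 < r → |g r| ≤ K * (r ^ n * f r)) → IntegrableOn g (Ioi 0) := by
    intro g K hg hb
    refine Integrable.mono' (hf.const_mul K) (hg.aestronglyMeasurable measurableSet_Ioi) ?_
    exact (ae_restrict_iff' measurableSet_Ioi).2 (Eventually.of_forall fun r hr => hb r hr)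
  -- `G` is `r^{n-1}v²`, written so that `n - 1` is not a subtraction of natural numbers.
  let G : ℝ → ℝ := fun r => r ^ n * (V.v r t ^ 2 / r)
  let G' : ℝ → ℝ := fun r => r ^ n * ((n - 1) * (V.v r t ^ 2 / r ^ 2) + 2 * V.v r t * V.vr r t / r)
  have hGG' : ∀ r, 0 < r → HasDerivAt G (G' r) r := by
    intro r hr
    have h := (RadialWave.hasDerivAt_pow_div n hr).mul (((hvr r hr).pow 2).div (hasDerivAt_id r) hr.ne')
    refine h.congr_deriv ?_
    simp [G']
    field_simp
    ring
  have hn1 : (1 : ℝ) ≤ n := by exact_mod_cast hn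
  have hpn : ContinuousOn (fun r : ℝ => r ^ n) (Ioi 0) := by fun_prop
  have hVp : ContinuousOn (fun r : ℝ => |V.v r t| ^ (p + 1)) (Ioi 0) :=
    hc.abs.rpow_const fun r _ => Or.inr (by linarith)
  have hp1 : 0 < p + 1 := by linarith
  have hGi : IntegrableOn (fun r => G r / r) (Ioi 0) := by
    refine hdom _ 1 ?_ ?_
    · refine ((hpn.mul ((hc.pow 2).mul hid)).mul hid).congr fun r _ => ?_
      simp [G, div_eq_mul_inv]
    · intro r hr
      have : G r / r = r ^ n * (V.v r t ^ 2 / r ^ 2) := by simp only [G]; field_simp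
      rw [this, one_mul, abs_of_nonneg (by positivity)]
      refine mul_le_mul_of_nonneg_left ?_ (by positivity)
      have h2 : 0 ≤ |V.v r t| ^ (p + 1) := by positivity
      simp only [f]
      nlinarith [sq_nonneg (V.vr r t), sq_nonneg (V.vt r t)]
  have hG'i : IntegrableOn G' (Ioi 0) := by
    refine hdom _ n ?_ ?_
    · refine (hpn.mul (((hc.pow 2).mul (hid.pow 2)).const_mul ((n : ℝ) - 1) |>.add
        (((hc.mul hcr).mul hid).const_mul 2))).congr fun r _ => ?_
      simp only [G', div_eq_mul_inv, Pi.mul_apply, Pi.add_apply, Pi.pow_apply, inv_pow]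
      ring
    · intro r hr
      simp only [G', f]
      rw [abs_mul, abs_of_pos (by positivity : 0 < r ^ n), mul_left_comm]
      refine mul_le_mul_of_nonneg_left ?_ (by positivity)
      have h2 : 0 ≤ |V.v r t| ^ (p + 1) := by positivity
      have h3 : V.v r t ^ 2 / r ^ 2 = (V.v r t / r) ^ 2 := by rw [div_pow]
      have h4 : 2 * V.v r t * V.vr r t / r = 2 * (V.v r t / r) * V.vr r t := by ring
      rw [h3, h4]
      set y := V.v r t / r
      set z := V.vr r t
      have h5 : |2 * y * z| ≤ y ^ 2 + z ^ 2 := by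
        rw [abs_le]; constructor <;> nlinarith [sq_nonneg (y + z), sq_nonneg (y - z)]
      have h6 : |((n : ℝ) - 1) * y ^ 2| = (n - 1) * y ^ 2 := abs_of_nonneg (by
        have : 0 ≤ (n : ℝ) - 1 := by linarith
        positivity)
      have h7 := abs_add_le (((n : ℝ) - 1) * y ^ 2) (2 * y * z)
      nlinarith [sq_nonneg (V.vt r t), sq_nonneg z, sq_nonneg y]
  have hei : IntegrableOn (fun r => r ^ n * e r) (Ioi 0) := by
    refine hdom _ (1 + |a|) ?_ ?_
    · refine (hpn.mul (((((hcr.pow 2).const_mul (1 / 2)).add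
        (((hc.pow 2).mul (hid.pow 2)).const_mul (a / 2))).add ((hct.pow 2).const_mul (1 / 2))).add
        (hVp.const_mul (1 / (p + 1))))).congr fun r _ => ?_
      simp only [e, div_eq_mul_inv, Pi.mul_apply, Pi.add_apply, Pi.pow_apply, inv_pow]
      ring
    · intro r hr
      simp only [e, f]
      rw [abs_mul, abs_of_pos (by positivity : 0 < r ^ n), mul_left_comm]
      refine mul_le_mul_of_nonneg_left ?_ (by positivity)
      have h1 : 1 / (p + 1) ≤ 1 := by rw [div_le_one hp1]; linarith
      have h2 : 0 ≤ |V.v r t| ^ (p + 1) := by positivity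
      have h20 : 0 ≤ 1 / (p + 1) * |V.v r t| ^ (p + 1) := by positivity
      have h21 : 1 / (p + 1) * |V.v r t| ^ (p + 1) ≤ |V.v r t| ^ (p + 1) := by nlinarith
      have h3 : a / 2 * V.v r t ^ 2 / r ^ 2 = a / 2 * (V.v r t ^ 2 / r ^ 2) := by ring
      have h4 : 0 ≤ V.v r t ^ 2 / r ^ 2 := by positivity
      rw [h3]
      have h5 := mul_le_mul_of_nonneg_right (le_abs_self a) h4
      have h6 := mul_le_mul_of_nonneg_right (neg_abs_le a) h4
      have h7 := mul_nonneg (abs_nonneg a) h4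
      have h8 := mul_nonneg (abs_nonneg a) (add_nonneg (add_nonneg (sq_nonneg (V.vr r t))
        (sq_nonneg (V.vt r t))) h2)
      rw [abs_le]
      constructor <;> nlinarith [sq_nonneg (V.vr r t), sq_nonneg (V.vt r t)]
  have hdens : ∀ r ∈ Ioi (0 : ℝ), r ^ n * e r + ((n : ℝ) - 1) / 4 * G' r = V.dens r t := by
    intro r hr
    have hr0 : r ≠ 0 := ne_of_gt hr
    simp only [e, G', RadialWave.dens]
    field_simp
    ring
  have hsum := hei.add (hG'i.const_mul (((n : ℝ) - 1) / 4))
  refine ⟨hsum.congr_fun hdens measurableSet_Ioi, ?_⟩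
  rw [hE, ← setIntegral_congr_fun measurableSet_Ioi hdens, integral_add hei (hG'i.const_mul _),
    integral_const_mul, integral_deriv_eq_zero hGG' hGi hG'i]
  simp

/-- The partial derivatives of `w = r^{n/2}v`. -/
theorem wfun_derivs (S : Sol (n + 1) a p) (V : RadialWave n a p) (hV : V.v = S.rad) {r t : ℝ}
    (hr : 0 < r) :
    deriv (wfun (n + 1) S.rad r) t = r ^ ((n : ℝ) / 2) * V.vt r t ∧
    deriv (fun ρ => wfun (n + 1) S.rad ρ t) r
      = r ^ ((n : ℝ) / 2) * (V.vr r t + n / 2 * V.v r t / r) := by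
  have hm : (((n + 1 : ℕ) : ℝ) - 1) / 2 = (n : ℝ) / 2 := by push_cast; ring
  constructor
  · have h := (hasDerivAt_snd_slice (V.hv r t hr)).const_mul (r ^ ((n : ℝ) / 2))
    have e : wfun (n + 1) S.rad r = fun τ => r ^ ((n : ℝ) / 2) * V.v r τ := by
      funext τ
      rw [wfun, hm, hV]
    rw [e]
    exact h.deriv
  · have h := ((hasDerivAt_id r).rpow_const (p := (n : ℝ) / 2) (Or.inl hr.ne')).mul
      (hasDerivAt_fst_slice (V.hv r t hr))
    have e : (fun ρ => wfun (n + 1) S.rad ρ t) = fun ρ => ρ ^ ((n : ℝ) / 2) * V.v ρ t := by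
      funext ρ
      rw [wfun, hm, hV]
    rw [e]
    refine h.deriv.trans ?_
    simp [Real.rpow_sub_one hr.ne']
    field_simp
    ring

end FromSol

/-! ### The variation estimates -/

/-- **Variation along characteristic lines (Proposition 5.3).** With
`β = ((d−1)(p−1)−2)/(2(p+1)) ∈ (0,1/2)`, there is a constant `C = C(d,p,a,E)` such that for
every finite-energy radial classical solution with energy `E` and all
`τ + 1 < t₁ < t₂ < s − 1`, the variation of `∂ₜw ± ∂ᵣw` along characteristics is bounded by
`C(s−t₂)^{−β}` resp. `C(t₁−τ)^{−β}`. -/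
theorem characteristic_variation (d : ℕ) (a p : ℝ) (hd3 : 3 ≤ d) (hd6 : d ≤ 6)
    (hp1 : 1 + 4 / ((d : ℝ) - 1) ≤ p) (hp2 : p < 1 + 4 / ((d : ℝ) - 2))
    (ha : -((d : ℝ) - 2) ^ 2 / 4 + (((d : ℝ) - 2) * p - d) ^ 2 / (4 * p ^ 2) < a)
    (β : ℝ) (hβ : β = (((d : ℝ) - 1) * (p - 1) - 2) / (2 * (p + 1)))
    (E : ℝ) :
    0 < β ∧ β < 1 / 2 ∧
    ∃ C : ℝ, 0 < C ∧
      ∀ S : Sol d a p, S.energy = E →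
        ∀ τ t₁ t₂ s : ℝ, τ + 1 < t₁ → t₁ < t₂ → t₂ < s - 1 →
          |(deriv (wfun d S.rad (s - t₂)) t₂
              + deriv (fun ρ => wfun d S.rad ρ t₂) (s - t₂))
            - (deriv (wfun d S.rad (s - t₁)) t₁
              + deriv (fun ρ => wfun d S.rad ρ t₁) (s - t₁))|
            ≤ C * (s - t₂) ^ (-β) ∧
          |(deriv (wfun d S.rad (t₂ - τ)) t₂
              - deriv (fun ρ => wfun d S.rad ρ t₂) (t₂ - τ))
            - (deriv (wfun d S.rad (t₁ - τ)) t₁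
              - deriv (fun ρ => wfun d S.rad ρ t₁) (t₁ - τ))|
            ≤ C * (t₁ - τ) ^ (-β) := by
  have hn2 : (2 : ℝ) ≤ (d : ℝ) - 1 := by
    have : (3 : ℝ) ≤ d := by exact_mod_cast hd3
    linarith
  have hp : 1 < p := lt_of_lt_of_le (by
    have : 0 < 4 / ((d : ℝ) - 1) := div_pos (by norm_num) (by linarith)
    linarith) hp1
  have hpl : 4 ≤ ((d : ℝ) - 1) * (p - 1) := by
    have h : 4 / ((d : ℝ) - 1) ≤ p - 1 := by linarith
    rw [div_le_iff₀ (by linarith)] at h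
    linarith
  have hpu : ((d : ℝ) - 2) * (p - 1) < 4 := by
    have h : p - 1 < 4 / ((d : ℝ) - 2) := by linarith
    rw [lt_div_iff₀ (by linarith)] at h
    linarith
  have hβ0 : 0 < β := by
    rw [hβ]
    exact div_pos (by linarith) (by linarith)
  have hβ1 : β < 1 / 2 := by
    rw [hβ, div_lt_div_iff₀ (by linarith) (by norm_num)]
    linarith
  refine ⟨hβ0, hβ1, ?_⟩
  obtain ⟨n, rfl⟩ : ∃ n, d = n + 1 := ⟨d - 1, by omega⟩
  have hn1 : 1 ≤ n := by omega
  have hcast : ((n + 1 : ℕ) : ℝ) - 1 = n := by push_cast; ring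
  have hcast2 : ((n + 1 : ℕ) : ℝ) - 2 = n - 1 := by push_cast; ring
  rw [hcast] at hβ hpl
  rw [hcast2] at ha
  -- The strict lower bound on `a` is stronger than the Hardy condition `a > −(d−2)²/4`.
  have hκ : 0 < a + (((n : ℝ) - 1) / 2) ^ 2 := by
    have : 0 ≤ (((n : ℝ) - 1) * p - (n + 1 : ℕ)) ^ 2 / (4 * p ^ 2) := by positivity
    nlinarith
  have hβ' : β * (p + 1) = n * (p - 1) / 2 - 1 := by
    rw [hβ]
    field_simp
  set σ := ((n + 1 : ℕ) : ℝ) *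
    (volume : Measure (EuclideanSpace ℝ (Fin (n + 1)))).real (ball 0 1) with hσ
  have hσ0 : 0 < σ := by
    refine mul_pos (by positivity) ?_
    exact ENNReal.toReal_pos (measure_ball_pos _ _ one_pos).ne' measure_ball_lt_top.ne
  refine ⟨|RadialWave.varConst n a p β (E / σ)| + 1, by positivity, ?_⟩
  intro S hSE τ t₁ t₂ s h1 h12 h2
  obtain ⟨V, hV⟩ := exists_radialWave S
  have hInt : ∀ t, IntegrableOn (fun r => V.dens r t) (Ioi 0) :=
    fun t => (energy_eq hn1 hp S V hV t).1
  have hM : ∀ t, ∫ r in Ioi 0, V.dens r t ≤ E / σ := by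
    intro t
    have h := (energy_eq hn1 hp S V hV t).2
    rw [hSE, ← mul_assoc, ← hσ] at h
    rw [le_div_iff₀ hσ0, h]
    linarith
  have hfin : ∀ {x r : ℝ}, 0 < r → x ≤ RadialWave.varConst n a p β (E / σ) * r ^ (-β) →
      x ≤ (|RadialWave.varConst n a p β (E / σ)| + 1) * r ^ (-β) := fun hr hx =>
    hx.trans (mul_le_mul_of_nonneg_right (by linarith [le_abs_self (RadialWave.varConst n a p β (E / σ))])
      (Real.rpow_nonneg hr.le _))
  constructor
  · refine hfin (by linarith) ?_
    obtain ⟨a1, a2⟩ := wfun_derivs S V hV (show 0 < s - t₂ by linarith) (t := t₂)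
    obtain ⟨b1, b2⟩ := wfun_derivs S V hV (show 0 < s - t₁ by linarith) (t := t₁)
    have h := V.variation hp hκ hβ' hβ0 hβ1 hInt hM h12 h2
    rw [a1, a2, b1, b2]
    refine le_trans (le_of_eq ?_) h
    congr 1
    simp only [RadialWave.W]
    ring
  -- The outgoing characteristic `r = t - τ` becomes an incoming one under time reversal, with
  -- `-t₂ < -t₁` as the two times.
  · refine hfin (by linarith) ?_
    obtain ⟨a1, a2⟩ := wfun_derivs S V hV (show 0 < t₂ - τ by linarith) (t := t₂)
    obtain ⟨b1, b2⟩ := wfun_derivs S V hV (show 0 < t₁ - τ by linarith) (t := t₁)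
    have h := V.rev.variation hp hκ hβ' hβ0 hβ1 (fun t => by simpa only [V.rev_dens] using hInt (-t))
      (fun t => by simpa only [V.rev_dens] using hM (-t)) (s := -τ) (t₁ := -t₂) (t₂ := -t₁)
      (by linarith) (by linarith)
    rw [show -τ - -t₁ = t₁ - τ by ring, show -τ - -t₂ = t₂ - τ by ring] at h
    rw [a1, a2, b1, b2]
    refine le_trans (le_of_eq ?_) h
    congr 1
    simp only [RadialWave.W, RadialWave.rev, neg_neg]
    ring
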